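/- arXiv:2102.04397 — 2 statements merged into one kernel-verified Lean document; each statement's English description precedes it below -/
import Mathlib

section
/- (Semidiscrete transport.) Let c(x,y) = ‖x−y‖² on ℝ^d × ℝ^d, let Γ = spt π_* for an optimal transport π_* ∈ Π(μ,ν), suppose there is a Kantorovich potential ψ with I(x,y) = c(x,y) − ψ^c(y) + ψ(x) on X_0 × Y_0, let X_0 := proj_X Γ be strictly convex, let μ be absolutely continuous with respect to Lebesgue measure, and let spt ν be at most countable with no accumulation points. Then {I = 0} ∩ (X_0 × Y_0) = Γ. -/
open MeasureTheory Filter Topology Set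
open scoped ENNReal

noncomputable section

namespace EOT

variable {X Y : Type*}

/-- A coupling of `μ` and `ν`: a probability measure on the product with the given marginals. -/
def IsCoupling [MeasurableSpace X] [MeasurableSpace Y]
    (μ : Measure X) (ν : Measure Y) (π : Measure (X × Y)) : Prop :=
  IsProbabilityMeasure π ∧ π.map Prod.fst = μ ∧ π.map Prod.snd = ν

/-- `(c,ε)`-cyclical invariance: `π` is equivalent to `P = μ ⊗ ν`, with a positive version of the
density satisfying the cyclical identity for all `k` points. -/
def IsCyclInvariant [MeasurableSpace X] [MeasurableSpace Y]
    (c : X → Y → ℝ) (ε : ℝ) (μ : Measure X) (ν : Measure Y)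
    (π : Measure (X × Y)) : Prop :=
  IsCoupling μ ν π ∧
  ∃ D : X × Y → ℝ, Measurable D ∧ (∀ z, 0 < D z) ∧
    π = (μ.prod ν).withDensity (fun z => ENNReal.ofReal (D z)) ∧
    ∀ (k : ℕ) (x : Fin (k + 1) → X) (y : Fin (k + 1) → Y),
      (∏ i, D (x i, y i)) =
        Real.exp (-(1 / ε) * ((∑ i, c (x i) (y i)) - ∑ i, c (x i) (y (i + 1)))) *
        ∏ i, D (x i, y (i + 1))

/-- Topological support of a measure. -/
def mSupport {Z : Type*} [TopologicalSpace Z] [MeasurableSpace Z] (π : Measure Z) : Set Z :=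
  {z | ∀ U : Set Z, IsOpen U → z ∈ U → 0 < π U}

/-- Weak convergence `π ε → π₀` as `ε → 0⁺`, tested against bounded continuous functions. -/
def TendstoWeakly {Z : Type*} [TopologicalSpace Z] [MeasurableSpace Z]
    (π : ℝ → Measure Z) (π₀ : Measure Z) : Prop :=
  ∀ f : BoundedContinuousFunction Z ℝ,
    Tendsto (fun ε => ∫ z, f z ∂(π ε)) (𝓝[>] (0 : ℝ)) (𝓝 (∫ z, f z ∂π₀))

/-- `c`-cyclical monotonicity of a set `Γ ⊆ X × Y`. -/
def CCyclMonotone (c : X → Y → ℝ) (Γ : Set (X × Y)) : Prop :=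
  ∀ (k : ℕ) (p : Fin (k + 1) → X × Y), (∀ i, p i ∈ Γ) →
    (∑ i, c (p i).1 (p i).2) ≤ ∑ i, c (p i).1 (p (i + 1)).2

/-- The rate function `I(x,y)`: supremum over `k ≥ 2`, points `(x_i,y_i)_{i=2}^k ⊆ Γ`
(the first point being `z`) and permutations `σ` of the cost difference. -/
def rateI (c : X → Y → ℝ) (Γ : Set (X × Y)) (z : X × Y) : EReal :=
  ⨆ (k : ℕ) (p : Fin (k + 2) → X × Y) (_ : p 0 = z) (_ : ∀ i, i ≠ 0 → p i ∈ Γ)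
    (σ : Equiv.Perm (Fin (k + 2))),
    (((∑ i, c (p i).1 (p i).2) - ∑ i, c (p i).1 (p (σ i)).2 : ℝ) : EReal)

/-- The variant of the rate function using only the cyclic shift. -/
def rateICyc (c : X → Y → ℝ) (Γ : Set (X × Y)) (z : X × Y) : EReal :=
  ⨆ (k : ℕ) (p : Fin (k + 2) → X × Y) (_ : p 0 = z) (_ : ∀ i, i ≠ 0 → p i ∈ Γ),
    (((∑ i, c (p i).1 (p i).2) - ∑ i, c (p i).1 (p (i + 1)).2 : ℝ) : EReal)

open scoped Classical in
/-- Relative entropy (Kullback–Leibler divergence) `H(π|R)`, valued in `EReal`. -/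
def relEntropy {Z : Type*} [MeasurableSpace Z] (π R : Measure Z) : EReal :=
  if π ≪ R ∧ Integrable (fun z => Real.log (π.rnDeriv R z).toReal) π
  then ((∫ z, Real.log (π.rnDeriv R z).toReal ∂π : ℝ) : EReal)
  else ⊤

/-- Transport cost `∫ c dπ` (as a lower integral). -/
def transportCost [MeasurableSpace X] [MeasurableSpace Y]
    (c : X → Y → ℝ) (π : Measure (X × Y)) : ℝ≥0∞ :=
  ∫⁻ z, ENNReal.ofReal (c z.1 z.2) ∂π

/-- Entropic optimal transport objective `∫ c dπ + ε H(π|μ⊗ν)`. -/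
def eotObj [MeasurableSpace X] [MeasurableSpace Y]
    (c : X → Y → ℝ) (ε : ℝ) (μ : Measure X) (ν : Measure Y) (π : Measure (X × Y)) : EReal :=
  (transportCost c π : EReal) + (ε : EReal) * relEntropy π (μ.prod ν)

/-- The `c`-conjugate `ψ^c(y) = inf_x [ψ(x) + c(x,y)]`. -/
def cConj (c : X → Y → ℝ) (ψ : X → EReal) (y : Y) : EReal :=
  ⨅ x, ψ x + (c x y : EReal)

/-- A proper `c`-convex function `ψ(x) = sup_y [ζ(y) − c(x,y)]`. -/
def IsCConvex (c : X → Y → ℝ) (ψ : X → EReal) : Prop :=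
  (∀ x, ψ x ≠ ⊥) ∧ (∃ x, ψ x ≠ ⊤) ∧
  ∃ ζ : Y → EReal, ∀ x, ψ x = ⨆ y, ζ y - (c x y : EReal)

/-- The `c`-subdifferential `∂_c ψ = {(x,y) : ψ^c(y) − ψ(x) = c(x,y)}`. -/
def cSubdiff (c : X → Y → ℝ) (ψ : X → EReal) : Set (X × Y) :=
  {p | cConj c ψ p.2 - ψ p.1 = (c p.1 p.2 : EReal)}

/-- A Kantorovich potential for `Γ`: a `c`-convex `ψ` with `Γ ⊆ ∂_c ψ`. -/
def IsKantorovichPotential (c : X → Y → ℝ) (Γ : Set (X × Y)) (ψ : X → EReal) : Prop :=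
  IsCConvex c ψ ∧ Γ ⊆ cSubdiff c ψ

/-- Uniqueness of Kantorovich potentials on a set `Λ ⊆ X`. -/
def UniquenessOfPotentials (c : X → Y → ℝ) (Γ : Set (X × Y)) (Λ : Set X) : Prop :=
  ∀ ψ₁ ψ₂ : X → EReal, IsKantorovichPotential c Γ ψ₁ → IsKantorovichPotential c Γ ψ₂ →
    ∀ x ∈ Λ, ∀ x' ∈ Λ, ψ₁ x - ψ₂ x = ψ₁ x' - ψ₂ x'

/-- The Rockafellar antiderivative `ψ_{(x₀,y₀)}` of `Γ`. -/
def rockafellar (c : X → Y → ℝ) (Γ : Set (X × Y)) (z₀ : X × Y) (x : X) : EReal :=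
  ⨆ (k : ℕ) (p : Fin (k + 1) → X × Y) (_ : ∀ i, p i ∈ Γ),
    ((c z₀.1 z₀.2 - c (p 0).1 z₀.2 +
        ∑ i : Fin (k + 1),
          (c (p i).1 (p i).2 -
            c (if h : (i : ℕ) + 1 < k + 1 then (p ⟨(i : ℕ) + 1, h⟩).1 else x) (p i).2) : ℝ) : EReal)

theorem mSupport_eq {Z : Type*} [TopologicalSpace Z] [MeasurableSpace Z] (π : Measure Z) :
    mSupport π = π.support := by
  ext z
  rw [Measure.mem_support_iff_forall]
  constructor
  · intro h U hU
    obtain ⟨V, hVU, hV, hz⟩ := mem_nhds_iff.1 hU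
    exact (h V hV hz).trans_le (measure_mono hVU)
  · intro h U hU hz
    exact h U (hU.mem_nhds hz)

theorem ereal_fin {a b : EReal} {r : ℝ} (h : b - a = (r : EReal)) :
    ∃ a' b' : ℝ, a = a' ∧ b = b' ∧ b' - a' = r := by
  induction a <;> induction b
  case coe.coe a b => exact ⟨a, b, rfl, rfl, by exact_mod_cast h⟩
  all_goals exfalso; revert h; simp [sub_eq_add_neg]

theorem cSubdiff_fin {c : X → Y → ℝ} {ψ : X → EReal} {x : X} {y : Y}
    (h : (x, y) ∈ cSubdiff c ψ) :
    ∃ a b : ℝ, ψ x = a ∧ cConj c ψ y = b ∧ b - a = c x y := by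
  have h' : cConj c ψ y - ψ x = (c x y : EReal) := h
  exact ereal_fin h'

section Aux

variable {F : Type*} [NormedAddCommGroup F] [InnerProductSpace ℝ F]

theorem halfspace_iff (x y η : F) (g r : ℝ) :
    r - ‖x - η‖ ^ 2 ≤ g - ‖x - y‖ ^ 2 ↔
      inner ℝ (η - y) x ≤ (g - r - ‖y‖ ^ 2 + ‖η‖ ^ 2) / 2 := by
  rw [norm_sub_sq_real, norm_sub_sq_real, inner_sub_left, real_inner_comm x η,
    real_inner_comm x y]
  constructor <;> intro h <;> linarith

theorem convex_C (ψ : F → EReal) (ζ : F → EReal)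
    (hζ : ∀ x, ψ x = ⨆ y, ζ y - ((‖x - y‖ ^ 2 : ℝ) : EReal)) (y : F) (g : ℝ) :
    Convex ℝ {x | ψ x ≤ ((g - ‖x - y‖ ^ 2 : ℝ) : EReal)} := by
  have : {x | ψ x ≤ ((g - ‖x - y‖ ^ 2 : ℝ) : EReal)} =
      ⋂ η, {x | ζ η - ((‖x - η‖ ^ 2 : ℝ) : EReal) ≤ ((g - ‖x - y‖ ^ 2 : ℝ) : EReal)} := by
    ext x
    simp only [mem_setOf_eq, mem_iInter, hζ, iSup_le_iff]
  rw [this]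
  refine convex_iInter fun η => ?_
  generalize ζ η = z
  induction z with
  | bot =>
    have : {x : F | (⊥ : EReal) - ((‖x - η‖ ^ 2 : ℝ) : EReal) ≤
        ((g - ‖x - y‖ ^ 2 : ℝ) : EReal)} = univ := by
      ext x; simp only [mem_setOf_eq, mem_univ, iff_true, sub_eq_add_neg, EReal.bot_add, bot_le]
    rw [this]; exact convex_univ
  | top =>
    have : {x : F | (⊤ : EReal) - ((‖x - η‖ ^ 2 : ℝ) : EReal) ≤
        ((g - ‖x - y‖ ^ 2 : ℝ) : EReal)} = ∅ := by
      ext x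
      simp only [mem_setOf_eq, mem_empty_iff_false, iff_false, EReal.top_sub_coe, top_le_iff]
      exact EReal.coe_ne_top _
    rw [this]; exact convex_empty
  | coe r =>
    have : {x : F | (r : EReal) - ((‖x - η‖ ^ 2 : ℝ) : EReal) ≤
        ((g - ‖x - y‖ ^ 2 : ℝ) : EReal)} =
        {x | innerSL ℝ (η - y) x ≤ (g - r - ‖y‖ ^ 2 + ‖η‖ ^ 2) / 2} := by
      ext x
      simp only [mem_setOf_eq]
      rw [← EReal.coe_sub, EReal.coe_le_coe_iff, halfspace_iff]
      rfl
    rw [this]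
    exact convex_halfSpace_le (innerSL ℝ (η - y)).isLinear _

/-- Uniqueness of the subgradient in the interior. -/
theorem unique_y {C : Set F} {w y y' : F} (hw : w ∈ interior C)
    (h : ∀ x ∈ C, ‖w - y'‖ ^ 2 - ‖w - y‖ ^ 2 ≤ ‖x - y'‖ ^ 2 - ‖x - y‖ ^ 2) : y' = y := by
  have hc : Tendsto (fun t : ℝ => w + t • (y' - y)) (𝓝[>] 0) (𝓝 w) := by
    have : Continuous (fun t : ℝ => w + t • (y' - y)) := by fun_prop
    have h2 := this.tendsto 0
    simp only [zero_smul, add_zero] at h2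
    exact h2.mono_left nhdsWithin_le_nhds
  have h1 := hc.eventually (mem_interior_iff_mem_nhds.1 hw)
  obtain ⟨t, ht, ht0⟩ := (h1.and self_mem_nhdsWithin).exists
  have ht0 : 0 < t := ht0
  have h3 := h _ ht
  have e1 : w + t • (y' - y) - y' = (w - y') + t • (y' - y) := by abel
  have e2 : w + t • (y' - y) - y = (w - y) + t • (y' - y) := by abel
  rw [e1, e2, norm_add_sq_real, norm_add_sq_real, inner_smul_right, inner_smul_right] at h3
  have e3 : inner ℝ (w - y) (y' - y) = inner ℝ (w - y') (y' - y) + ‖y' - y‖ ^ 2 := by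
    rw [← real_inner_self_eq_norm_sq, ← inner_add_left]; congr 1; abel
  rw [e3] at h3
  have h4 : t * ‖y' - y‖ ^ 2 ≤ 0 := by linarith
  have h5 : ‖y' - y‖ ^ 2 ≤ 0 := by
    by_contra hn
    push Not at hn
    exact absurd (mul_pos ht0 hn) (not_lt.2 h4)
  have h6 : ‖y' - y‖ = 0 := by
    have := norm_nonneg (y' - y)
    nlinarith
  exact sub_eq_zero.1 (norm_eq_zero.1 h6)

end Aux

section Statement

variable {d : ℕ}

local notation "E" => EuclideanSpace ℝ (Fin d)

/-- semidiscrete transport with quadratic cost: the zero set of the rate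
function inside `X₀ × Y₀` is exactly `Γ`. -/
theorem stmt16 (μ ν : Measure E) [IsProbabilityMeasure μ] [IsProbabilityMeasure ν]
    (πs : Measure (E × E)) (hπs : IsCoupling μ ν πs)
    (hopt : ∀ π', IsCoupling μ ν π' →
      transportCost (fun x y : E => ‖x - y‖ ^ 2) πs ≤
        transportCost (fun x y : E => ‖x - y‖ ^ 2) π')
    (ψ : E → EReal)
    (hψ : IsKantorovichPotential (fun x y : E => ‖x - y‖ ^ 2) (mSupport πs) ψ)
    (hdual : ∀ x ∈ Prod.fst '' mSupport πs, ∀ y ∈ Prod.snd '' mSupport πs,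
      rateI (fun x y : E => ‖x - y‖ ^ 2) (mSupport πs) (x, y) =
        ((‖x - y‖ ^ 2 : ℝ) : EReal) - cConj (fun x y : E => ‖x - y‖ ^ 2) ψ y + ψ x)
    (hstrict : ∀ x₁ ∈ Prod.fst '' mSupport πs, ∀ x₂ ∈ Prod.fst '' mSupport πs, x₁ ≠ x₂ →
      openSegment ℝ x₁ x₂ ⊆ interior (Prod.fst '' mSupport πs))
    (hμ : μ ≪ volume)
    (hν₁ : (mSupport ν).Countable) (hν₂ : ∀ x : E, ¬ AccPt x (𝓟 (mSupport ν))) :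
    {z : E × E | rateI (fun x y : E => ‖x - y‖ ^ 2) (mSupport πs) z = 0} ∩
        ((Prod.fst '' mSupport πs) ×ˢ (Prod.snd '' mSupport πs)) = mSupport πs := by
  have hfin : ∀ x y, (x, y) ∈ mSupport πs → ∃ a b : ℝ, ψ x = a ∧
      cConj (fun x y : E => ‖x - y‖ ^ 2) ψ y = b ∧ b - a = ‖x - y‖ ^ 2 :=
    fun x y hxy => cSubdiff_fin (hψ.2 hxy)
  obtain ⟨⟨-, -, ζ, hζ⟩, -⟩ := id hψ
  have hcl : IsClosed (mSupport πs) := by rw [mSupport_eq]; exact Measure.isClosed_support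
  have hae : πs (mSupport πs)ᶜ = 0 := by rw [mSupport_eq]; exact Measure.measure_compl_support
  ext ⟨x, y⟩
  constructor
  swap
  · intro hxy
    have hx : x ∈ Prod.fst '' mSupport πs := ⟨_, hxy, rfl⟩
    have hy : y ∈ Prod.snd '' mSupport πs := ⟨_, hxy, rfl⟩
    refine ⟨?_, hx, hy⟩
    obtain ⟨a, b, ha, hb, hab⟩ := hfin x y hxy
    rw [mem_setOf_eq, hdual x hx y hy, ha, hb, ← hab, ← EReal.coe_sub, ← EReal.coe_add]
    norm_num
  rintro ⟨h0, hx, hy⟩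
  simp only at hx hy
  rw [mem_setOf_eq, hdual x hx y hy] at h0
  obtain ⟨⟨x', y₁⟩, hx'y, hyy⟩ := id hy
  obtain rfl : y₁ = y := hyy
  obtain ⟨⟨x₁, y'⟩, hxy', hxx⟩ := id hx
  obtain rfl : x₁ = x := hxx
  rename' x₁ => x, y₁ => y
  obtain ⟨_, g, -, hg, -⟩ := hfin x' y hx'y
  obtain ⟨a, _, ha, -, -⟩ := hfin x y' hxy'
  rw [ha, hg, ← EReal.coe_sub, ← EReal.coe_add] at h0
  have h0' : ‖x - y‖ ^ 2 - g + a = 0 := by exact_mod_cast h0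
  set C : Set E := {x | ψ x ≤ ((g - ‖x - y‖ ^ 2 : ℝ) : EReal)} with hC
  have hCc : Convex ℝ C := convex_C ψ ζ hζ y g
  have hxC : x ∈ C := by
    rw [hC, mem_setOf_eq, ha, EReal.coe_le_coe_iff]; linarith
  have hΓC : ∀ z, (z, y) ∈ mSupport πs → z ∈ C := by
    intro z hz
    obtain ⟨a', b', ha', hb', hab'⟩ := hfin z y hz
    have : b' = g := by rw [hg] at hb'; exact_mod_cast hb'.symm
    rw [hC, mem_setOf_eq, ha', EReal.coe_le_coe_iff]; linarith
  -- points of the interior of `C` in `X₀` are matched with `y`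
  have hint : ∀ w ∈ interior C, w ∈ Prod.fst '' mSupport πs → (w, y) ∈ mSupport πs := by
    rintro w hw ⟨⟨w₁, y''⟩, hwy, hww⟩
    obtain rfl : w₁ = w := hww
    have : y'' = y := by
      refine unique_y hw fun z hz => ?_
      obtain ⟨a', b', ha', hb', hab'⟩ := hfin _ _ hwy
      have h1 : cConj (fun x y : E => ‖x - y‖ ^ 2) ψ y ≤ ψ w₁ + ((‖w₁ - y‖ ^ 2 : ℝ) : EReal) :=
        iInf_le _ w₁
      have h2 : cConj (fun x y : E => ‖x - y‖ ^ 2) ψ y'' ≤ ψ z + ((‖z - y''‖ ^ 2 : ℝ) : EReal) :=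
        iInf_le _ z
      have h3 := h2.trans (add_le_add_left hz _)
      rw [hg, ha', ← EReal.coe_add, EReal.coe_le_coe_iff] at h1
      rw [hb', ← EReal.coe_add, EReal.coe_le_coe_iff] at h3
      linarith
    rwa [← this]
  -- existence of an interior point
  have hex : ∃ x₀ ∈ interior C, (x₀, y) ∈ mSupport πs := by
    by_contra hne
    push Not at hne
    have hνs : ∀ a b, (a, b) ∈ mSupport πs → b ∈ mSupport ν := by
      intro a b hab V hV hbV
      rw [← hπs.2.2, Measure.map_apply measurable_snd hV.measurableSet]
      exact hab _ (hV.preimage continuous_snd) hbV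
    have hacc := hν₂ y
    rw [accPt_iff_nhds] at hacc
    push Not at hacc
    obtain ⟨U, hU, hUy⟩ := hacc
    obtain ⟨V, hVU, hV, hyV⟩ := mem_nhds_iff.1 hU
    have hpos := hx'y (Prod.snd ⁻¹' V) (hV.preimage continuous_snd) hyV
    have hfr : πs (Prod.fst ⁻¹' frontier C) = 0 := by
      rw [← Measure.map_apply measurable_fst isClosed_frontier.measurableSet, hπs.2.1]
      exact hμ (hCc.addHaar_frontier volume)
    have hsub : Prod.snd ⁻¹' V ⊆ (mSupport πs)ᶜ ∪ Prod.fst ⁻¹' frontier C := by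
      rintro ⟨p, q⟩ hq
      by_cases hpq : (p, q) ∈ mSupport πs
      · right
        have hqy : q = y := hUy q ⟨hVU hq, hνs p q hpq⟩
        subst hqy
        exact ⟨subset_closure (hΓC p hpq), fun hi => hne p hi hpq⟩
      · exact Or.inl hpq
    have := measure_mono_null hsub (measure_union_null hae hfr)
    exact hpos.ne' this
  obtain ⟨x₀, hx₀, hx₀y⟩ := hex
  by_cases hxx : x = x₀
  · rw [hxx]; exact hx₀y
  have hseg : openSegment ℝ x x₀ ⊆ {w | (w, y) ∈ mSupport πs} := fun w hw =>
    hint w (hCc.openSegment_self_interior_subset_interior hxC hx₀ hw)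
      (interior_subset (hstrict x hx x₀ ⟨_, hx₀y, rfl⟩ hxx hw))
  have hcl2 : IsClosed {w | (w, y) ∈ mSupport πs} := hcl.preimage (by fun_prop)
  exact (closure_minimal hseg hcl2)
    (segment_subset_closure_openSegment (left_mem_segment ℝ x x₀))

end Statement

end EOT
end
end

section
/- If a coupling π ∈ Π(μ,ν) is equivalent to P = μ⊗ν and a version dπ/dP: X×Y → (0,∞) of its density satisfies the (c,ε)-cyclical invariance identity for k = 2, i.e. (dπ/dP)(x_1,y_1)(dπ/dP)(x_2,y_2) = exp(−(1/ε)[c(x_1,y_1) + c(x_2,y_2) − c(x_1,y_2) − c(x_2,y_1)]) (dπ/dP)(x_1,y_2)(dπ/dP)(x_2,y_1) for all (x_1,y_1),(x_2,y_2) ∈ X×Y, then the identity holds for every k ≥ 2: for all (x_1,y_1),…,(x_k,y_k) ∈ X×Y (with y_{k+1} := y_1), ∏_{i=1}^k (dπ/dP)(x_i,y_i) = exp(−(1/ε)[Σ_{i=1}^k c(x_i,y_i) − Σ_{i=1}^k c(x_i,y_{i+1})]) ∏_{i=1}^k (dπ/dP)(x_i,y_{i+1}). -/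
open MeasureTheory Filter Topology Set
open scoped ENNReal

noncomputable section

namespace EOT

variable {X Y : Type*}

section Statement

variable {X Y : Type*}
  [MeasurableSpace X] [TopologicalSpace X] [PolishSpace X] [BorelSpace X]
  [MeasurableSpace Y] [TopologicalSpace Y] [PolishSpace Y] [BorelSpace Y]

/-- the cyclical invariance identity for `k = 2` implies it for all `k`. -/
theorem stmt18 (μ : Measure X) (ν : Measure Y)
    [IsProbabilityMeasure μ] [IsProbabilityMeasure ν]
    (c : X → Y → ℝ) (hc : Measurable fun p : X × Y => c p.1 p.2) (hc0 : ∀ x y, 0 ≤ c x y)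
    (ε : ℝ) (hε : 0 < ε) (π : Measure (X × Y)) (hπ : IsCoupling μ ν π)
    (D : X × Y → ℝ) (hD : Measurable D) (hDpos : ∀ z, 0 < D z)
    (hdens : π = (μ.prod ν).withDensity fun z => ENNReal.ofReal (D z))
    (h2 : ∀ x₁ x₂ y₁ y₂, D (x₁, y₁) * D (x₂, y₂) =
      Real.exp (-(1 / ε) * (c x₁ y₁ + c x₂ y₂ - c x₁ y₂ - c x₂ y₁)) *
        (D (x₁, y₂) * D (x₂, y₁))) :
    ∀ (k : ℕ) (x : Fin (k + 1) → X) (y : Fin (k + 1) → Y),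
      (∏ i, D (x i, y i)) =
        Real.exp (-(1 / ε) * ((∑ i, c (x i) (y i)) - ∑ i, c (x i) (y (i + 1)))) *
        ∏ i, D (x i, y (i + 1)) := by
  intro k x y
  have key : ∀ x₁ x₂ y₁ y₂, Real.log (D (x₁, y₁)) + Real.log (D (x₂, y₂)) =
      -(1 / ε) * (c x₁ y₁ + c x₂ y₂ - c x₁ y₂ - c x₂ y₁) +
        (Real.log (D (x₁, y₂)) + Real.log (D (x₂, y₁))) := by
    intro x₁ x₂ y₁ y₂
    have h := congrArg Real.log (h2 x₁ x₂ y₁ y₂)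
    rwa [Real.log_mul (hDpos _).ne' (hDpos _).ne',
      Real.log_mul (Real.exp_pos _).ne' (mul_pos (hDpos _) (hDpos _)).ne', Real.log_exp,
      Real.log_mul (hDpos _).ne' (hDpos _).ne'] at h
  have hsplit : ∀ i j, Real.log (D (x i, y j)) + (1 / ε) * c (x i) (y j) =
      (Real.log (D (x i, y 0)) + (1 / ε) * c (x i) (y 0)) +
      ((Real.log (D (x 0, y j)) + (1 / ε) * c (x 0) (y j)) -
        (Real.log (D (x 0, y 0)) + (1 / ε) * c (x 0) (y 0))) := by
    intro i j
    linear_combination key (x i) (x 0) (y j) (y 0)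
  have hsum : ∑ i, (Real.log (D (x i, y i)) + (1 / ε) * c (x i) (y i)) =
      ∑ i, (Real.log (D (x i, y (i + 1))) + (1 / ε) * c (x i) (y (i + 1))) := by
    rw [Finset.sum_congr rfl (fun i _ => hsplit i i),
      Finset.sum_congr rfl (fun i _ => hsplit i (i + 1)),
      Finset.sum_add_distrib]
    conv_rhs => rw [Finset.sum_add_distrib]
    congr 1
    exact (Equiv.sum_comp (Equiv.addRight (1 : Fin (k + 1))) (fun j =>
      (Real.log (D (x 0, y j)) + (1 / ε) * c (x 0) (y j)) -
        (Real.log (D (x 0, y 0)) + (1 / ε) * c (x 0) (y 0)))).symm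
  rw [Finset.sum_add_distrib, Finset.sum_add_distrib, ← Finset.mul_sum, ← Finset.mul_sum] at hsum
  have hp : ∀ f : Fin (k + 1) → X × Y, ∏ i, D (f i) = Real.exp (∑ i, Real.log (D (f i))) := by
    intro f
    rw [Real.exp_sum]
    exact Finset.prod_congr rfl (fun i _ => (Real.exp_log (hDpos _)).symm)
  rw [hp (fun i => (x i, y i)), hp (fun i => (x i, y (i + 1))), ← Real.exp_add]
  congr 1
  linear_combination hsum

end Statement

end EOT
end
end
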